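/- arXiv:1508.00072 — 6 statements merged into one kernel-verified Lean document; each statement's English description precedes it below -/
import Mathlib

section
/- Let I be a right L(V)-submodule of L(V,W) (i.e., closed under addition and under right composition with arbitrary linear endomorphisms of V). If I is finitely generated as a right L(V)-module, then I = { T ∈ L(V,W) : range T ⊆ im(I) }, where im(I) is the span of the union of the ranges of members of I. -/
variable {D V W : Type*} [DivisionRing D]
  [AddCommGroup V] [Module D V] [AddCommGroup W] [Module D W]

/-- `I` is a right `L(V)`-submodule of `L(V,W)`: closed under addition and
under right composition with arbitrary endomorphisms of `V`. -/
def IsRightSubmodule (I : Set (V →ₗ[D] W)) : Prop :=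
  (0 : V →ₗ[D] W) ∈ I ∧ (∀ S T : V →ₗ[D] W, S ∈ I → T ∈ I → S + T ∈ I) ∧
    (∀ S ∈ I, ∀ A : V →ₗ[D] V, S.comp A ∈ I)

/-- `I` is a left `L(W)`-submodule of `L(V,W)`: closed under addition and
under left composition with arbitrary endomorphisms of `W`. -/
def IsLeftSubmodule (I : Set (V →ₗ[D] W)) : Prop :=
  (0 : V →ₗ[D] W) ∈ I ∧ (∀ S T : V →ₗ[D] W, S ∈ I → T ∈ I → S + T ∈ I) ∧
    (∀ S ∈ I, ∀ A : W →ₗ[D] W, A.comp S ∈ I)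

/-- The image of a family of linear maps: the span of the union of their ranges. -/
def imageOf (I : Set (V →ₗ[D] W)) : Submodule D W :=
  ⨆ T ∈ I, LinearMap.range T

/-- `I` is finitely generated as a right `L(V)`-module. -/
def RightFG (I : Set (V →ₗ[D] W)) : Prop :=
  ∃ (n : ℕ) (T : Fin n → (V →ₗ[D] W)), (∀ i, T i ∈ I) ∧
    ∀ S ∈ I, ∃ P : Fin n → (V →ₗ[D] V), S = ∑ i, (T i).comp (P i)

/-- `I` is finitely generated as a left `L(W)`-module. -/
def LeftFG (I : Set (V →ₗ[D] W)) : Prop :=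
  ∃ (n : ℕ) (T : Fin n → (V →ₗ[D] W)), (∀ i, T i ∈ I) ∧
    ∀ S ∈ I, ∃ P : Fin n → (W →ₗ[D] W), S = ∑ i, (P i).comp (T i)

theorem stmt_9 (I : Set (V →ₗ[D] W)) (hI : IsRightSubmodule I) (hfg : RightFG I) :
    I = {T : V →ₗ[D] W | LinearMap.range T ≤ imageOf I} := by
  obtain ⟨h0, hadd, hcomp⟩ := hI
  obtain ⟨n, T, hT, hgen⟩ := hfg
  ext S
  constructor
  · intro hS
    exact le_iSup₂_of_le (f := fun (T : V →ₗ[D] W) (_ : T ∈ I) => LinearMap.range T) S hS le_rfl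
  · intro hS
    let Φ : (Fin n → V) →ₗ[D] W := ∑ i, (T i).comp (LinearMap.proj i)
    have hΦ : ∀ v, Φ v = ∑ i, T i (v i) := by
      intro v
      simp [Φ]
    have him : imageOf I ≤ LinearMap.range Φ := by
      refine iSup₂_le ?_
      intro R hR
      obtain ⟨P, rfl⟩ := hgen R hR
      rintro _ ⟨x, rfl⟩
      refine ⟨fun i => P i x, ?_⟩
      rw [hΦ]
      simp
    obtain ⟨g, hg⟩ := LinearMap.exists_rightInverse_of_surjective Φ.rangeRestrict
      Φ.range_rangeRestrict
    let S' : V →ₗ[D] LinearMap.range Φ :=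
      S.codRestrict (LinearMap.range Φ) (fun x => him (hS ⟨x, rfl⟩))
    have hSeq : S = ∑ i, (T i).comp ((LinearMap.proj i).comp (g.comp S')) := by
      ext x
      have h1 : Φ (g (S' x)) = S x := by
        have h2 := congrArg Subtype.val (LinearMap.congr_fun hg (S' x))
        simpa [S'] using h2
      rw [← h1, hΦ]
      simp
    rw [hSeq]
    exact Finset.sum_induction _ (· ∈ I) (fun a b => hadd a b) h0
      (fun i _ => hcomp _ (hT i) _)
end

section
/- Let I be a right L(V)-submodule of L(V,W) and suppose there exist T₁,…,Tₙ ∈ I such that im(I) = span of ⋃_{i=1}^n range Tᵢ. Then I is generated as a right L(V)-module by T₁,…,Tₙ. -/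
variable {D V W : Type*} [DivisionRing D]
  [AddCommGroup V] [Module D V] [AddCommGroup W] [Module D W]

theorem stmt_10 (I : Set (V →ₗ[D] W)) (hI : IsRightSubmodule I)
    (n : ℕ) (T : Fin n → (V →ₗ[D] W)) (hT : ∀ i, T i ∈ I)
    (him : imageOf I = ⨆ i, LinearMap.range (T i)) :
    I = {S : V →ₗ[D] W | ∃ P : Fin n → (V →ₗ[D] V), S = ∑ i, (T i).comp (P i)} := by
  classical
  apply Set.Subset.antisymm
  · intro S hS
    let F : (Fin n → V) →ₗ[D] W := ∑ i, (T i).comp (LinearMap.proj i)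
    have hF : ∀ x, F x = ∑ i, T i (x i) := by
      intro x
      simp [F, LinearMap.sum_apply]
    have hle : (⨆ i, LinearMap.range (T i)) ≤ LinearMap.range F := by
      refine iSup_le fun i => ?_
      rintro _ ⟨v, rfl⟩
      refine ⟨Pi.single i v, ?_⟩
      rw [hF, Finset.sum_eq_single i]
      · simp
      · intro j _ hj
        simp [Pi.single_eq_of_ne hj]
      · simp
    have hSr : ∀ v, S v ∈ LinearMap.range F := by
      intro v
      apply hle
      rw [← him]
      have h : LinearMap.range S ≤ imageOf I :=
        le_iSup₂_of_le (f := fun (T : V →ₗ[D] W) (_ : T ∈ I) => LinearMap.range T) S hS le_rfl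
      exact h ⟨v, rfl⟩
    obtain ⟨Q, hQ⟩ := Module.projective_lifting_property F.rangeRestrict
      (S.codRestrict (LinearMap.range F) hSr) F.surjective_rangeRestrict
    refine ⟨fun i => (LinearMap.proj i).comp Q, ?_⟩
    ext v
    have h := congrArg Subtype.val (LinearMap.congr_fun hQ v)
    have h2 : F (Q v) = S v := h
    rw [← h2, hF]
    simp [LinearMap.sum_apply]
  · rintro S ⟨P, rfl⟩
    exact Finset.sum_induction _ (· ∈ I) hI.2.1 hI.1
      (fun i _ => hI.2.2 _ (hT i) (P i))
end

section
/- Let I be a left L(W)-submodule of L(V,W) and suppose there exist T₁,…,Tₙ ∈ I such that ⋂_{T∈I} ker T = ⋂_{i=1}^n ker Tᵢ. Then I is generated as a left L(W)-module by T₁,…,Tₙ. -/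
variable {D V W : Type*} [DivisionRing D]
  [AddCommGroup V] [Module D V] [AddCommGroup W] [Module D W]

theorem stmt_11 (I : Set (V →ₗ[D] W)) (hI : IsLeftSubmodule I)
    (n : ℕ) (T : Fin n → (V →ₗ[D] W)) (hT : ∀ i, T i ∈ I)
    (hker : (⨅ S ∈ I, LinearMap.ker S) = ⨅ i, LinearMap.ker (T i)) :
    I = {S : V →ₗ[D] W | ∃ P : Fin n → (W →ₗ[D] W), S = ∑ i, (P i).comp (T i)} := by
  obtain ⟨h0, hadd, hcomp⟩ := hI
  ext S
  constructor
  · intro hS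
    have hk : ∀ v, (∀ i, T i v = 0) → S v = 0 := by
      intro v hv
      have h1 : v ∈ ⨅ S ∈ I, LinearMap.ker S := by
        rw [hker]
        simpa [Submodule.mem_iInf] using hv
      simp only [Submodule.mem_iInf, LinearMap.mem_ker] at h1
      exact h1 S hS
    let F : V →ₗ[D] (Fin n → W) := LinearMap.pi T
    obtain ⟨s, hs⟩ := F.rangeRestrict.exists_rightInverse_of_surjective F.range_rangeRestrict
    obtain ⟨f, hf⟩ := LinearMap.exists_extend (S.comp s)
    refine ⟨fun i => f.comp (LinearMap.single D (fun _ => W) i), ?_⟩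
    ext v
    have h2 : f (F v) = S (s (F.rangeRestrict v)) :=
      LinearMap.congr_fun hf (F.rangeRestrict v)
    have h3 : F (s (F.rangeRestrict v)) = F v :=
      congrArg Subtype.val (LinearMap.congr_fun hs (F.rangeRestrict v))
    have h4 : S (s (F.rangeRestrict v) - v) = 0 := by
      apply hk
      intro i
      rw [map_sub, sub_eq_zero]
      exact congrFun h3 i
    rw [map_sub, sub_eq_zero] at h4
    have h5 : F v = ∑ i, Pi.single i (T i v) := (Finset.univ_sum_single (F v)).symm
    rw [← h4, ← h2, h5, map_sum, LinearMap.sum_apply]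
    rfl
  · rintro ⟨P, rfl⟩
    exact Finset.sum_induction _ (· ∈ I) (fun a b => hadd a b) h0
      (fun i _ => hcomp _ (hT i) (P i))
end

section
/- Let I be a right L(V)-submodule of L(V,W) whose image im(I) (the span of the union of ranges of its elements) is finite-dimensional. Then I is finitely generated as a right L(V)-module, and I = { T ∈ L(V,W) : range T ⊆ im(I) }. -/
variable {D V W : Type*} [DivisionRing D]
  [AddCommGroup V] [Module D V] [AddCommGroup W] [Module D W]

theorem stmt_12_aux (I : Set (V →ₗ[D] W))
    (hfin : FiniteDimensional D (imageOf I)) :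
    ∃ (n : ℕ) (T : Fin n → (V →ₗ[D] W)), (∀ i, T i ∈ I) ∧
      ∀ S : V →ₗ[D] W, LinearMap.range S ≤ imageOf I →
        ∃ P : Fin n → (V →ₗ[D] V), S = ∑ i, (T i).comp (P i) := by
  classical
  have hspan : imageOf I = Submodule.span D {w | ∃ T ∈ I, ∃ v, T v = w} := by
    apply le_antisymm
    · refine iSup₂_le fun T hT => ?_
      rintro _ ⟨v, rfl⟩
      exact Submodule.subset_span ⟨T, hT, v, rfl⟩
    · rw [Submodule.span_le]
      rintro _ ⟨T, hT, v, rfl⟩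
      exact (le_iSup₂_of_le (f := fun (T : V →ₗ[D] W) (_ : T ∈ I) => LinearMap.range T)
        T hT le_rfl) ⟨v, rfl⟩
  obtain ⟨b, hbs, hb, hli⟩ := exists_linearIndependent D {w | ∃ T ∈ I, ∃ v, T v = w}
  have hU : imageOf I = Submodule.span D (Set.range ((↑) : b → W)) := by
    rw [hspan, Subtype.range_coe, hb]
  let B := Module.Basis.span hli
  have hfin2 : FiniteDimensional D (Submodule.span D (Set.range ((↑) : b → W))) := hU ▸ hfin
  have : Finite b := Module.Finite.finite_basis B
  obtain ⟨n, ⟨e⟩⟩ := Finite.exists_equiv_fin b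
  choose T hT v hv using fun i : Fin n => hbs (e.symm i).2
  refine ⟨n, T, hT, fun S hS => ?_⟩
  let S' : V →ₗ[D] Submodule.span D (Set.range ((↑) : b → W)) :=
    S.codRestrict _ fun x => hU ▸ hS ⟨x, rfl⟩
  let B' := B.reindex e
  refine ⟨fun i => ((B'.coord i).comp S').smulRight (v i), ?_⟩
  ext x
  have h := congrArg Subtype.val (B'.sum_repr (S' x))
  rw [LinearMap.sum_apply]
  have h2 : ∀ i, ((B' i : Submodule.span D (Set.range ((↑) : b → W))) : W) = T i (v i) := by
    intro i
    simp [B', B, hv, Module.Basis.span_apply]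
  simp only [Submodule.coe_sum, Submodule.coe_smul, h2] at h
  simpa [S'] using h.symm

theorem stmt_12 (I : Set (V →ₗ[D] W)) (hI : IsRightSubmodule I)
    (hfin : FiniteDimensional D (imageOf I)) :
    RightFG I ∧ I = {T : V →ₗ[D] W | LinearMap.range T ≤ imageOf I} := by
  obtain ⟨n, T, hT, hgen⟩ := stmt_12_aux I hfin
  have hle : ∀ S ∈ I, LinearMap.range S ≤ imageOf I := fun S hS =>
    le_iSup₂_of_le (f := fun (T : V →ₗ[D] W) (_ : T ∈ I) => LinearMap.range T) S hS le_rfl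
  refine ⟨⟨n, T, hT, fun S hS => hgen S (hle S hS)⟩, Set.Subset.antisymm hle ?_⟩
  intro S hS
  obtain ⟨P, rfl⟩ := hgen S hS
  exact Finset.sum_induction _ (· ∈ I) (fun a b ha hb => hI.2.1 a b ha hb) hI.1
    fun i _ => hI.2.2 _ (hT i) _
end

section
/- Let I be a left L(W)-submodule of L(V,W) such that the quotient V / (⋂_{T∈I} ker T) is finite-dimensional. Then I is finitely generated as a left L(W)-module. -/
variable {D V W : Type*} [DivisionRing D]
  [AddCommGroup V] [Module D V] [AddCommGroup W] [Module D W]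

theorem stmt_13 (I : Set (V →ₗ[D] W)) (hI : IsLeftSubmodule I)
    (hfin : FiniteDimensional D (V ⧸ (⨅ T ∈ I, LinearMap.ker T))) :
    LeftFG I := by
  classical
  set K : Submodule D V := ⨅ T ∈ I, LinearMap.ker T with hK
  let k : Finset (V →ₗ[D] W) → Submodule D V := fun s => ⨅ T ∈ s, LinearMap.ker T
  have hKk : ∀ s : Finset (V →ₗ[D] W), (∀ T ∈ s, T ∈ I) → K ≤ k s := fun s hs =>
    le_iInf₂ fun T hT => iInf₂_le T (hs T hT)
  obtain ⟨_, ⟨s, hs, rfl⟩, hmin⟩ := IsArtinian.set_has_minimal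
    {N : Submodule D (V ⧸ K) | ∃ s : Finset (V →ₗ[D] W), (∀ T ∈ s, T ∈ I) ∧
      (k s).map K.mkQ = N} ⟨_, ∅, by simp, rfl⟩
  have hker : ∀ T ∈ I, k s ≤ LinearMap.ker T := by
    intro T hT
    have hins : ∀ T' ∈ insert T s, T' ∈ I := by
      intro T' h
      rcases Finset.mem_insert.1 h with rfl | h
      · exact hT
      · exact hs _ h
    have hle : k (insert T s) ≤ k s :=
      le_iInf₂ fun T' h => iInf₂_le T' (Finset.mem_insert_of_mem h)
    have hn := hmin _ ⟨insert T s, hins, rfl⟩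
    have heq := eq_of_le_of_not_lt (Submodule.map_mono (f := K.mkQ) hle) hn
    have h2 := congrArg (Submodule.comap K.mkQ) heq
    rw [Submodule.comap_map_mkQ, Submodule.comap_map_mkQ, sup_eq_right.2 (hKk _ hins),
      sup_eq_right.2 (hKk _ hs)] at h2
    rw [← h2]
    exact iInf₂_le T (Finset.mem_insert_self T s)
  let T : Fin s.card → (V →ₗ[D] W) := fun i => (s.equivFin.symm i : V →ₗ[D] W)
  refine ⟨s.card, T, fun i => hs _ (s.equivFin.symm i).2, fun S hS => ?_⟩
  let Φ : V →ₗ[D] (Fin s.card → W) := LinearMap.pi T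
  have hΦ : LinearMap.ker Φ ≤ LinearMap.ker S := by
    refine le_trans (le_iInf₂ fun R hR => ?_) (hker S hS)
    intro v hv
    have := congrFun (LinearMap.mem_ker.1 hv) (s.equivFin ⟨R, hR⟩)
    simpa [Φ, T] using this
  obtain ⟨g, hg⟩ := LinearMap.exists_leftInverse_of_injective
    ((LinearMap.ker Φ).liftQ Φ le_rfl) (Submodule.ker_liftQ_eq_bot _ _ _ le_rfl)
  let P := ((LinearMap.ker Φ).liftQ S hΦ).comp g
  refine ⟨fun i => P.comp (LinearMap.single D (fun _ => W) i), ?_⟩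
  ext v
  have h1 : P (Φ v) = S v := by
    have := LinearMap.congr_fun hg ((LinearMap.ker Φ).mkQ v)
    simp only [LinearMap.comp_apply, Submodule.mkQ_apply, Submodule.liftQ_apply,
      LinearMap.id_apply] at this
    simp [P, this]
  have h2 : Φ v = ∑ i, LinearMap.single D (fun _ => W) i (T i v) := by
    ext j
    simp [Φ, Finset.sum_apply, Pi.single_apply]
  rw [← h1, h2, map_sum]
  simp
end

section
/- Let I be a right L(V)-submodule of L(V,W). Then the set of finite-rank elements of I equals { T ∈ L(V,W) : T has finite rank and range T ⊆ im(I) }, where im(I) is the span of the union of ranges of elements of I. -/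
variable {D V W : Type*} [DivisionRing D]
  [AddCommGroup V] [Module D V] [AddCommGroup W] [Module D W]

theorem stmt_14 (I : Set (V →ₗ[D] W)) (hI : IsRightSubmodule I) :
    {T : V →ₗ[D] W | T ∈ I ∧ FiniteDimensional D (LinearMap.range T)} =
      {T : V →ₗ[D] W | FiniteDimensional D (LinearMap.range T) ∧
        LinearMap.range T ≤ imageOf I} := by
  obtain ⟨h0, hadd, hcomp⟩ := hI
  ext T
  simp only [Set.mem_ofPred_eq]
  constructor
  · rintro ⟨hT, hf⟩
    exact ⟨hf, le_iSup₂_of_le T hT le_rfl⟩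
  · rintro ⟨hf, hle⟩
    refine ⟨?_, hf⟩
    -- rank one maps with values in the image belong to `I`
    have key : ∀ w ∈ imageOf I, ∀ f : V →ₗ[D] D,
        (LinearMap.toSpanSingleton D W w).comp f ∈ I := by
      intro w hw f
      unfold imageOf at hw
      rw [iSup_subtype'] at hw
      induction hw using Submodule.iSup_induction' with
      | mem S x hx =>
        obtain ⟨v, rfl⟩ := hx
        have := hcomp S.1 S.2 ((LinearMap.toSpanSingleton D V v).comp f)
        convert this using 1
        ext u
        simp
      | zero =>
        convert h0 using 1
        ext u
        simp
      | add x y _ _ hx hy =>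
        convert hadd _ _ hx hy using 1
        ext u
        simp
    have hsum : ∀ (n : ℕ) (F : Fin n → (V →ₗ[D] W)), (∀ i, F i ∈ I) → ∑ i, F i ∈ I := by
      intro n F hF
      exact Finset.sum_induction F (· ∈ I) hadd h0 (fun i _ => hF i)
    let b := Module.finBasis D (LinearMap.range T)
    have hT : T = ∑ i, (LinearMap.toSpanSingleton D W (b i : W)).comp
        ((b.coord i).comp T.rangeRestrict) := by
      ext u
      have := congrArg Subtype.val (b.sum_repr (T.rangeRestrict u))
      simp only [LinearMap.sum_apply, LinearMap.comp_apply, LinearMap.toSpanSingleton_apply,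
        Module.Basis.coord_apply]
      rw [Submodule.coe_sum] at this
      exact this.symm
    rw [hT]
    exact hsum _ _ fun i => key _ (hle (b i).2) _
end
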